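/- Let n ≥ 1 and let ℓ₁, …, ℓₙ be strictly positive real numbers with total length P = ∑_{j=1}^{n} ℓⱼ and persistence entropy R = E(ℓ₁, …, ℓₙ). Then for every real number ℓ₀ > 0, the persistence entropy of the augmented list obtained by adding one extra bar of length ℓ₀ satisfies E(ℓ₀, ℓ₁, …, ℓₙ) ≤ E(P / exp(R), ℓ₁, …, ℓₙ). In other words, among all possible lengths of a single additional bar, the persistence entropy of the augmented barcode is maximized when the additional bar has length P / exp(R). -/

import Mathlib

/-- The persistence entropy of a finite list of bar lengths:
`E(L) = -∑ⱼ pⱼ log pⱼ` where `pⱼ = ℓⱼ / S_L` and `S_L = ∑ⱼ ℓⱼ`. -/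
noncomputable def persistenceEntropy (L : List ℝ) : ℝ :=
  -(L.map (fun x => x / L.sum * Real.log (x / L.sum))).sum

open Real Set

/-! Chain rule: if `L` has total length `P` and `p = a / (a + P)` is the weight of the added bar,
then `E(a :: L) = H(p) + (1 - p) * E(L)`, where `H` is the binary entropy. The right-hand side is
concave in `p`, and its derivative `log (1 - p) - log p - E(L)` vanishes at
`p = 1 / (1 + exp E(L))`, the weight of a bar of length `P / exp E(L)`. -/

theorem isMaxOn_of_concaveOn_of_hasDerivAt_zero {f : ℝ → ℝ} {s : Set ℝ} {x : ℝ}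
    (hf : ConcaveOn ℝ s f) (hx : x ∈ interior s) (hfx : HasDerivAt f 0 x) : IsMaxOn f s x := by
  have hderiv : derivWithin (-f) (Ioi x) x = 0 := by
    simpa only [neg_zero] using hfx.neg.hasDerivWithinAt.derivWithin (uniqueDiffWithinAt_Ioi x)
  simpa only [Pi.neg_apply, neg_neg] using (hf.neg.isMinOn_of_rightDeriv_eq_zero hx hderiv).neg

theorem log_one_sub_sigmoid_sub_log_sigmoid (x : ℝ) :
    log (1 - sigmoid x) - log (sigmoid x) = -x := by
  have hodds : sigmoid (-x) = sigmoid x * exp (-x) := (sigmoid_mul_rexp_neg x).symm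
  rw [← sigmoid_neg, hodds, log_mul (sigmoid_pos x).ne' (exp_pos _).ne', log_exp,
    add_sub_cancel_left]

theorem isMaxOn_binEntropy_add_one_sub_mul (r : ℝ) :
    IsMaxOn (fun p ↦ binEntropy p + (1 - p) * r) (Icc 0 1) (sigmoid (-r)) := by
  have hconcave : ConcaveOn ℝ (Icc 0 1) (fun p ↦ binEntropy p + (1 - p) * r) := by
    refine strictConcave_binEntropy.concaveOn.add ⟨convex_Icc 0 1, fun x _ y _ a b _ _ hab ↦ ?_⟩
    simp only [smul_eq_mul]
    exact le_of_eq (by linear_combination r * hab)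
  refine isMaxOn_of_concaveOn_of_hasDerivAt_zero hconcave ?_ ?_
  · rw [interior_Icc]
    exact ⟨sigmoid_pos _, sigmoid_lt_one _⟩
  · have hentropy := hasDerivAt_binEntropy (sigmoid_pos (-r)).ne' (sigmoid_lt_one (-r)).ne
    rw [log_one_sub_sigmoid_sub_log_sigmoid, neg_neg] at hentropy
    have hlinear := ((hasDerivAt_id (sigmoid (-r))).const_sub 1).mul_const r
    exact (hentropy.add hlinear).congr_deriv (by ring)

theorem persistenceEntropy_eq_sum_negMulLog (L : List ℝ) :
    persistenceEntropy L = (L.map fun x ↦ negMulLog (x / L.sum)).sum := by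
  simp only [persistenceEntropy, negMulLog_eq_neg, List.sum_neg, List.map_map, Function.comp_def]

theorem sum_map_negMulLog_div {L : List ℝ} (hL : L.sum ≠ 0) (S : ℝ) :
    (L.map fun x ↦ negMulLog (x / S)).sum =
      negMulLog (L.sum / S) + L.sum / S * persistenceEntropy L := by
  have hweight (x : ℝ) : negMulLog (x / S) =
      L.sum / S * negMulLog (x / L.sum) + x * (negMulLog (L.sum / S) / L.sum) := by
    rw [← div_mul_div_cancel₀ hL, negMulLog_mul]
    ring
  rw [funext hweight, List.sum_map_add, List.sum_map_mul_left, List.sum_map_mul_right,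
    List.map_id', ← persistenceEntropy_eq_sum_negMulLog, mul_div_cancel₀ _ hL, add_comm]

theorem persistenceEntropy_cons {a : ℝ} {L : List ℝ} (hL : L.sum ≠ 0) (haL : a + L.sum ≠ 0) :
    persistenceEntropy (a :: L) =
      binEntropy (a / (a + L.sum)) + (1 - a / (a + L.sum)) * persistenceEntropy L := by
  have hcompl : 1 - a / (a + L.sum) = L.sum / (a + L.sum) := by
    rw [one_sub_div haL, add_sub_cancel_left]
  rw [persistenceEntropy_eq_sum_negMulLog, List.map_cons, List.sum_cons, List.sum_cons,
    sum_map_negMulLog_div hL, binEntropy_eq_negMulLog_add_negMulLog_one_sub, hcompl, add_assoc]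

theorem div_exp_div_add_self_eq_sigmoid {P : ℝ} (hP : P ≠ 0) (r : ℝ) :
    P / exp r / (P / exp r + P) = sigmoid (-r) := by
  rw [sigmoid_def, neg_neg]
  have hden : 1 + exp r ≠ 0 := by positivity
  field_simp

/-- Among all possible lengths of a single additional bar, the persistence
entropy of the augmented barcode is maximized when the additional bar has
length `P / exp(R)`, where `P` is the total length and `R` the persistence
entropy of the original barcode. -/
theorem entropy_add_bar_le (n : ℕ) (hn : 1 ≤ n) (L : List ℝ)
    (hlen : L.length = n) (hpos : ∀ x ∈ L, 0 < x)
    (ℓ₀ : ℝ) (hℓ₀ : 0 < ℓ₀) :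
    persistenceEntropy (ℓ₀ :: L) ≤
      persistenceEntropy ((L.sum / Real.exp (persistenceEntropy L)) :: L) := by
  have hL : L ≠ [] := List.ne_nil_of_length_pos (hlen ▸ hn)
  have hP : 0 < L.sum := List.sum_pos L hpos hL
  have hmem : ℓ₀ / (ℓ₀ + L.sum) ∈ Icc 0 1 :=
    ⟨by positivity, div_le_one_of_le₀ (by linarith) (by positivity)⟩
  rw [persistenceEntropy_cons hP.ne' (by positivity),
    persistenceEntropy_cons hP.ne' (by positivity), div_exp_div_add_self_eq_sigmoid hP.ne']
  exact isMaxOn_binEntropy_add_one_sub_mul (persistenceEntropy L) hmem
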